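/- There exists a positive absolute constant C_0 ≥ 1 such that for every positive integer n, every β > 0, every j ∈ [n], and every real u ≥ C_0 max{β^{-1}, 1}, one has P(N_j ≥ u) ≤ 4 exp(-u/8). -/

import Mathlib

/-!
Fix `j` and `M = max(β⁻¹, 1)`. The set `H_j` splits into the up-crossings `k < j ≤ σ₀(k)`, of which
there are `D(σ₀)`, and the `k < j` with `σ₀(k) < j` and `E_k ≥ j - max(k, σ₀(k))`.

Given `σ₀`, the second part is a sum of independent Bernoulli variables with success probabilities
`exp(-2β(j - max(k, σ₀(k))))`. Their sum is at most `3M` for every permutation (a geometric series,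
`sum_leftWeight_le`), so the conditional exponential moment of `N_j` is at most
`e · exp(D(σ₀) + 6M)` (`lintegral_exp_count_le`).

For `D`, a switching argument is used. A permutation has as many down-crossings as up-crossings. If
`a` is an up-crossing and `c` a down-crossing of `σ`, then `τ = σ ∘ (a c)` has both `a` and `c` on
their own side of the cut, and
`w(σ) = w(τ) exp(-2β(min(c, τ c) - max(a, τ a)))` (`mallowsWeight_swap`). Summing over `(σ, a, c)`,
and bounding the resulting sums over `a` and `c` by geometric series, gives
`∑ D² e^D w ≤ e (3M)² ∑ e^D w` (`sum_sq_mul_exp_le`). Since `e^D ≤ e^{7M} + e^D D² / (7M)²` and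
`9e/49 ≤ 1/2`, this yields `E e^D ≤ 2 e^{7M}` (`sum_exp_le`). Markov's inequality applied to
`exp(N_j)` then gives the claim with `C₀ = 16`.
-/

open scoped BigOperators Classical ENNReal
open MeasureTheory

/-- The (unnormalized) Mallows weight `exp(-β ∑ᵢ |σ(i) - i|)` for the `L¹` distance.
Permutations of `[n] = {1, …, n}` are modeled as permutations of `Fin n`. -/
noncomputable def mallowsWeight (n : ℕ) (β : ℝ) (σ : Equiv.Perm (Fin n)) : ℝ :=
  Real.exp (-β * ∑ i : Fin n, |((σ i : ℕ) : ℝ) - ((i : ℕ) : ℝ)|)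

/-- The probability of `σ` under the Mallows permutation model `P_{n,β}`. -/
noncomputable def mallowsProb (n : ℕ) (β : ℝ) (σ : Equiv.Perm (Fin n)) : ℝ :=
  mallowsWeight n β σ / ∑ τ : Equiv.Perm (Fin n), mallowsWeight n β τ

instance (n : ℕ) : MeasurableSpace (Equiv.Perm (Fin n)) := ⊤

/-- The Mallows model `P_{n,β}` as a measure on `S_n`. -/
noncomputable def mallowsMeasure (n : ℕ) (β : ℝ) : Measure (Equiv.Perm (Fin n)) :=
  ∑ σ : Equiv.Perm (Fin n),
    ENNReal.ofReal (mallowsProb n β σ) • MeasureTheory.Measure.dirac σ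

/-- The probability space carrying `σ₀ ~ P_{n,β}` together with `n` i.i.d. exponential
random variables `E₁, …, E_n` of rate `2β`, independent of `σ₀`.  A sample point is
`ω = (σ₀, (E_k)_{k ∈ [n]})`. -/
noncomputable def hitRunMeasure (n : ℕ) (β : ℝ) :
    Measure (Equiv.Perm (Fin n) × (Fin n → ℝ)) :=
  (mallowsMeasure n β).prod
    (Measure.pi fun _ : Fin n => ProbabilityTheory.expMeasure (2 * β))

/-- `b_k = max{k, σ₀(k)} + E_k` (so that, conditionally on `σ₀`,
`P(b_k ≥ x | σ₀) = exp(-2β (x - max{k, σ₀(k)})₊)`).  In `Fin n` coordinates all the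
`b_k` and the thresholds `j` are shifted by one simultaneously. -/
noncomputable def bVal (n : ℕ) (ω : Equiv.Perm (Fin n) × (Fin n → ℝ)) (k : Fin n) : ℝ :=
  max ((k : ℕ) : ℝ) ((ω.1 k : ℕ) : ℝ) + ω.2 k

/-- `H_j = {k ∈ [n] : k ≤ j - 1, b_k ≥ j}`. -/
noncomputable def Hset (n : ℕ) (ω : Equiv.Perm (Fin n) × (Fin n → ℝ)) (j : Fin n) :
    Finset (Fin n) :=
  Finset.univ.filter fun k => k < j ∧ ((j : ℕ) : ℝ) ≤ bVal n ω k

/-- `N_j = 1 + #{k ∈ [n] : k ≤ j - 1, b_k ≥ j}`. -/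
noncomputable def Nval (n : ℕ) (ω : Equiv.Perm (Fin n) × (Fin n → ℝ)) (j : Fin n) : ℕ :=
  1 + (Hset n ω j).card

/-! ### Crossings of the cut at `j` -/

/-- The up-crossings of `σ`: positions `a < j` with `σ a ≥ j`. -/
noncomputable def upCross {n : ℕ} (j : Fin n) (σ : Equiv.Perm (Fin n)) : Finset (Fin n) :=
  Finset.univ.filter fun a => a < j ∧ j ≤ σ a

/-- The down-crossings of `σ`: positions `c ≥ j` with `σ c < j`. -/
noncomputable def downCross {n : ℕ} (j : Fin n) (σ : Equiv.Perm (Fin n)) : Finset (Fin n) :=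
  Finset.univ.filter fun c => j ≤ c ∧ σ c < j

/-- The positions `a < j` with `σ a < j`. -/
noncomputable def leftStay {n : ℕ} (j : Fin n) (σ : Equiv.Perm (Fin n)) : Finset (Fin n) :=
  Finset.univ.filter fun a => a < j ∧ σ a < j

/-- The positions `c ≥ j` with `σ c ≥ j`. -/
noncomputable def rightStay {n : ℕ} (j : Fin n) (σ : Equiv.Perm (Fin n)) : Finset (Fin n) :=
  Finset.univ.filter fun c => j ≤ c ∧ j ≤ σ c

lemma mem_upCross {n : ℕ} {j : Fin n} {σ : Equiv.Perm (Fin n)} {a : Fin n} :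
    a ∈ upCross j σ ↔ a < j ∧ j ≤ σ a := by
  simp [upCross]

lemma mem_downCross {n : ℕ} {j : Fin n} {σ : Equiv.Perm (Fin n)} {a : Fin n} :
    a ∈ downCross j σ ↔ j ≤ a ∧ σ a < j := by
  simp [downCross]

lemma mem_leftStay {n : ℕ} {j : Fin n} {σ : Equiv.Perm (Fin n)} {a : Fin n} :
    a ∈ leftStay j σ ↔ a < j ∧ σ a < j := by
  simp [leftStay]

lemma mem_rightStay {n : ℕ} {j : Fin n} {σ : Equiv.Perm (Fin n)} {a : Fin n} :
    a ∈ rightStay j σ ↔ j ≤ a ∧ j ≤ σ a := by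
  simp [rightStay]

lemma card_downCross {n : ℕ} (j : Fin n) (σ : Equiv.Perm (Fin n)) :
    (downCross j σ).card = (upCross j σ).card := by
  have h1 : (Finset.univ.filter fun a : Fin n => a < j).card
      = (upCross j σ).card + (leftStay j σ).card := by
    rw [← Finset.card_union_of_disjoint]
    · congr 1
      ext a
      simp only [upCross, leftStay, Finset.mem_filter, Finset.mem_univ, true_and, Finset.mem_union]
      rcases lt_or_ge (σ a) j with h | h <;> simp [h, not_le.mpr, not_lt.mpr]
    · rw [Finset.disjoint_left]
      intro a ha hb
      simp only [upCross, leftStay, Finset.mem_filter, Finset.mem_univ, true_and] at ha hb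
      exact absurd ha.2 (not_le.mpr hb.2)
  have h2 : (Finset.univ.filter fun a : Fin n => σ a < j).card
      = (downCross j σ).card + (leftStay j σ).card := by
    rw [← Finset.card_union_of_disjoint]
    · congr 1
      ext a
      simp only [downCross, leftStay, Finset.mem_filter, Finset.mem_univ, true_and,
        Finset.mem_union]
      rcases lt_or_ge a j with h | h <;> simp [h, not_le.mpr, not_lt.mpr]
    · rw [Finset.disjoint_left]
      intro a ha hb
      simp only [downCross, leftStay, Finset.mem_filter, Finset.mem_univ, true_and] at ha hb
      exact absurd ha.1 (not_le.mpr hb.1)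
  have h3 : (Finset.univ.filter fun a : Fin n => σ a < j).card
      = (Finset.univ.filter fun a : Fin n => a < j).card := by
    refine Finset.card_bij (fun a _ => σ a) ?_ ?_ ?_
    · intro a ha
      simpa using ha
    · intro a _ b _ h
      exact σ.injective h
    · intro b hb
      exact ⟨σ.symm b, by simpa using hb, by simp⟩
  omega

/-! ### Geometric sums -/

lemma sum_range_exp_le {s : ℝ} (hs : 0 < s) (N : ℕ) :
    ∑ m ∈ Finset.range N, Real.exp (-s * m) ≤ 1 + 1 / s := by
  induction N with
  | zero => simp; positivity
  | succ N ih =>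
    rw [Finset.sum_range_succ']
    have h1 : ∀ m : ℕ, Real.exp (-s * ((m + 1 : ℕ) : ℝ)) = Real.exp (-s) * Real.exp (-s * m) := by
      intro m
      rw [← Real.exp_add]
      congr 1
      push_cast
      ring
    simp only [h1, ← Finset.mul_sum]
    have h2 : Real.exp (-s) * (1 + s) ≤ 1 := by
      have := Real.add_one_le_exp s
      calc Real.exp (-s) * (1 + s) ≤ Real.exp (-s) * Real.exp s := by
            gcongr
            linarith
        _ = 1 := by rw [← Real.exp_add]; simp
    have h3 : Real.exp (-s) * (1 + 1 / s) ≤ 1 / s := by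
      have : Real.exp (-s) * (1 + 1 / s) = Real.exp (-s) * (1 + s) / s := by
        field_simp
        ring
      rw [this]
      gcongr
    have h4 := mul_le_mul_of_nonneg_left ih (Real.exp_pos (-s)).le
    simp only [Nat.cast_zero, mul_zero, Real.exp_zero]
    linarith

lemma sum_exp_injOn_le {n : ℕ} {s : ℝ} (hs : 0 < s) (S : Finset (Fin n)) (φ : Fin n → ℕ)
    (hφ : Set.InjOn φ S) : ∑ a ∈ S, Real.exp (-s * φ a) ≤ 1 + 1 / s := by
  rw [← Finset.sum_image (f := fun m : ℕ => Real.exp (-s * m)) hφ]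
  refine le_trans ?_ (sum_range_exp_le hs ((S.image φ).sup id + 1))
  refine Finset.sum_le_sum_of_subset_of_nonneg ?_ (fun _ _ _ => (Real.exp_pos _).le)
  intro m hm
  exact Finset.mem_range.mpr (Nat.lt_succ_of_le (Finset.le_sup (f := id) hm))

/-- `exp(-2β(j - max(a, τ a)))`, the probability that `E_a ≥ j - max(a, τ a)`. -/
noncomputable def leftWeight {n : ℕ} (β : ℝ) (j : Fin n) (τ : Equiv.Perm (Fin n)) (a : Fin n) : ℝ :=
  Real.exp (-(2 * β) * (((j : ℕ) : ℝ) - max ((a : ℕ) : ℝ) ((τ a : ℕ) : ℝ)))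

/-- `exp(-2β(min(c, τ c) - j))`, the counterpart of `leftWeight` to the right of the cut. -/
noncomputable def rightWeight {n : ℕ} (β : ℝ) (j : Fin n) (τ : Equiv.Perm (Fin n)) (c : Fin n) :
    ℝ :=
  Real.exp (-(2 * β) * (min ((c : ℕ) : ℝ) ((τ c : ℕ) : ℝ) - ((j : ℕ) : ℝ)))

lemma geom_const_le {β : ℝ} (hβ : 0 < β) :
    (1 + 1 / (2 * β)) + (1 + 1 / (2 * β)) ≤ 3 * max β⁻¹ 1 := by
  have h1 := le_max_left β⁻¹ 1
  have h2 := le_max_right β⁻¹ 1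
  have h3 : 1 / (2 * β) = β⁻¹ / 2 := by field_simp
  rw [h3]
  linarith

lemma sum_leftWeight_le {n : ℕ} {β : ℝ} (hβ : 0 < β) (j : Fin n) (τ : Equiv.Perm (Fin n)) :
    ∑ a ∈ leftStay j τ, leftWeight β j τ a ≤ 3 * max β⁻¹ 1 := by
  have h1 := sum_exp_injOn_le (s := 2 * β) (by positivity) (leftStay j τ)
    (fun a => (j : ℕ) - (a : ℕ)) (by
      intro a ha b hb h
      simp only [leftStay, Finset.coe_filter, Finset.mem_univ, true_and, Set.mem_ofPred_eq,
        Fin.lt_def] at ha hb h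
      exact Fin.ext (by omega))
  have h2 := sum_exp_injOn_le (s := 2 * β) (by positivity) (leftStay j τ)
    (fun a => (j : ℕ) - (τ a : ℕ)) (by
      intro a ha b hb h
      simp only [leftStay, Finset.coe_filter, Finset.mem_univ, true_and, Set.mem_ofPred_eq,
        Fin.lt_def] at ha hb h
      exact τ.injective (Fin.ext (by omega)))
  refine le_trans ?_ (geom_const_le hβ)
  refine le_trans ?_ (add_le_add h1 h2)
  rw [← Finset.sum_add_distrib]
  refine Finset.sum_le_sum fun a ha => ?_
  simp only [leftStay, Finset.mem_filter, Finset.mem_univ, true_and, Fin.lt_def] at ha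
  rw [Nat.cast_sub ha.1.le, Nat.cast_sub ha.2.le, leftWeight]
  rcases max_choice ((a : ℕ) : ℝ) ((τ a : ℕ) : ℝ) with h | h <;> rw [h]
  · exact le_add_of_nonneg_right (Real.exp_pos _).le
  · exact le_add_of_nonneg_left (Real.exp_pos _).le

lemma sum_rightWeight_le {n : ℕ} {β : ℝ} (hβ : 0 < β) (j : Fin n) (τ : Equiv.Perm (Fin n)) :
    ∑ c ∈ rightStay j τ, rightWeight β j τ c ≤ 3 * max β⁻¹ 1 := by
  have h1 := sum_exp_injOn_le (s := 2 * β) (by positivity) (rightStay j τ)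
    (fun a => (a : ℕ) - (j : ℕ)) (by
      intro a ha b hb h
      simp only [rightStay, Finset.coe_filter, Finset.mem_univ, true_and, Set.mem_ofPred_eq,
        Fin.le_def] at ha hb h
      exact Fin.ext (by omega))
  have h2 := sum_exp_injOn_le (s := 2 * β) (by positivity) (rightStay j τ)
    (fun a => (τ a : ℕ) - (j : ℕ)) (by
      intro a ha b hb h
      simp only [rightStay, Finset.coe_filter, Finset.mem_univ, true_and, Set.mem_ofPred_eq,
        Fin.le_def] at ha hb h
      exact τ.injective (Fin.ext (by omega)))
  refine le_trans ?_ (geom_const_le hβ)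
  refine le_trans ?_ (add_le_add h1 h2)
  rw [← Finset.sum_add_distrib]
  refine Finset.sum_le_sum fun a ha => ?_
  simp only [rightStay, Finset.mem_filter, Finset.mem_univ, true_and, Fin.le_def] at ha
  rw [Nat.cast_sub ha.1, Nat.cast_sub ha.2, rightWeight]
  rcases min_choice ((a : ℕ) : ℝ) ((τ a : ℕ) : ℝ) with h | h <;> rw [h]
  · exact le_add_of_nonneg_right (Real.exp_pos _).le
  · exact le_add_of_nonneg_left (Real.exp_pos _).le

/-! ### The switching argument -/

/-- Exchanging the images of a left-staying `a` and a right-staying `c` multiplies the Mallows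
weight by `leftWeight a * rightWeight c`. -/
lemma mallowsWeight_swap {n : ℕ} (β : ℝ) (j : Fin n) (τ : Equiv.Perm (Fin n)) {a c : Fin n}
    (ha : a ∈ leftStay j τ) (hc : c ∈ rightStay j τ) :
    mallowsWeight n β (τ * Equiv.swap a c)
      = mallowsWeight n β τ * (leftWeight β j τ a * rightWeight β j τ c) := by
  simp only [leftStay, rightStay, Finset.mem_filter, Finset.mem_univ, true_and] at ha hc
  obtain ⟨ha1, ha2⟩ := ha
  obtain ⟨hc1, hc2⟩ := hc
  have hne : a ≠ c := (ha1.trans_le hc1).ne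
  have key : ∑ i : Fin n, (|(((τ * Equiv.swap a c) i : ℕ) : ℝ) - ((i : ℕ) : ℝ)|
        - |((τ i : ℕ) : ℝ) - ((i : ℕ) : ℝ)|)
      = 2 * (min ((c : ℕ) : ℝ) ((τ c : ℕ) : ℝ) - max ((a : ℕ) : ℝ) ((τ a : ℕ) : ℝ)) := by
    rw [Fintype.sum_eq_add a c hne]
    · simp only [Equiv.Perm.mul_apply, Equiv.swap_apply_left, Equiv.swap_apply_right]
      have e1 : ((a : ℕ) : ℝ) ≤ ((j : ℕ) : ℝ) := by exact_mod_cast ha1.le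
      have e2 : ((τ a : ℕ) : ℝ) ≤ ((j : ℕ) : ℝ) := by exact_mod_cast ha2.le
      have e3 : ((j : ℕ) : ℝ) ≤ ((c : ℕ) : ℝ) := by exact_mod_cast hc1
      have e4 : ((j : ℕ) : ℝ) ≤ ((τ c : ℕ) : ℝ) := by exact_mod_cast hc2
      rw [abs_of_nonneg (by linarith : (0 : ℝ) ≤ ((τ c : ℕ) : ℝ) - ((a : ℕ) : ℝ)),
        abs_of_nonpos (by linarith : ((τ a : ℕ) : ℝ) - ((c : ℕ) : ℝ) ≤ 0)]
      rcases le_total ((a : ℕ) : ℝ) ((τ a : ℕ) : ℝ) with h | h <;>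
      rcases le_total ((c : ℕ) : ℝ) ((τ c : ℕ) : ℝ) with h' | h' <;>
      simp only [h, h', max_eq_left, max_eq_right, min_eq_left, min_eq_right, abs_of_nonneg,
        abs_of_nonpos, sub_nonneg, sub_nonpos] <;> ring
    · rintro x ⟨hx1, hx2⟩
      simp [Equiv.swap_apply_of_ne_of_ne hx1 hx2]
  rw [Finset.sum_sub_distrib] at key
  rw [mallowsWeight, mallowsWeight, leftWeight, rightWeight, ← Real.exp_add, ← Real.exp_add]
  congr 1
  rw [eq_add_of_sub_eq key]
  ring

lemma card_upCross_swap_le {n : ℕ} (j : Fin n) (τ : Equiv.Perm (Fin n)) {a c : Fin n}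
    (hc : j ≤ c) :
    (upCross j (τ * Equiv.swap a c)).card ≤ (upCross j τ).card + 1 := by
  refine le_trans (Finset.card_le_card ?_) (Finset.card_insert_le a _)
  intro x hx
  simp only [mem_upCross, Equiv.Perm.mul_apply, Finset.mem_insert] at hx ⊢
  by_cases hxa : x = a
  · exact Or.inl hxa
  · right
    have hxc : x ≠ c := (hx.1.trans_le hc).ne
    rwa [Equiv.swap_apply_of_ne_of_ne hxa hxc] at hx

lemma mallowsWeight_pos {n : ℕ} (β : ℝ) (σ : Equiv.Perm (Fin n)) : 0 < mallowsWeight n β σ :=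
  Real.exp_pos _

/-- The second moment of the number of crossings, exponentially tilted: the `D²` choices of an
up-crossing and a down-crossing are reindexed by the permutation obtained by undoing that pair. -/
lemma sum_sq_mul_exp_le {n : ℕ} {β : ℝ} (hβ : 0 < β) (j : Fin n) :
    ∑ σ : Equiv.Perm (Fin n), ((upCross j σ).card : ℝ) ^ 2 *
        (Real.exp (upCross j σ).card * mallowsWeight n β σ)
      ≤ Real.exp 1 * (3 * max β⁻¹ 1) ^ 2 *
        ∑ σ : Equiv.Perm (Fin n), Real.exp (upCross j σ).card * mallowsWeight n β σ := by
  set f : Equiv.Perm (Fin n) → ℝ := fun σ => Real.exp (upCross j σ).card * mallowsWeight n β σ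
    with hf
  calc ∑ σ, ((upCross j σ).card : ℝ) ^ 2 * f σ
      = ∑ σ, ∑ p : Fin n × Fin n,
          if p.1 ∈ upCross j σ ∧ p.2 ∈ downCross j σ then f σ else 0 := by
        refine Finset.sum_congr rfl fun σ _ => ?_
        rw [← Finset.sum_filter, Finset.sum_const]
        have : (Finset.univ.filter fun p : Fin n × Fin n =>
            p.1 ∈ upCross j σ ∧ p.2 ∈ downCross j σ) = upCross j σ ×ˢ downCross j σ := by
          ext p
          simp
        rw [this, Finset.card_product, card_downCross, nsmul_eq_mul]
        push_cast
        ring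
    _ = ∑ p : Fin n × Fin n, ∑ σ,
          if p.1 ∈ upCross j σ ∧ p.2 ∈ downCross j σ then f σ else 0 := Finset.sum_comm
    _ = ∑ p : Fin n × Fin n, ∑ τ : Equiv.Perm (Fin n),
          if p.1 ∈ leftStay j τ ∧ p.2 ∈ rightStay j τ
            then f (τ * Equiv.swap p.1 p.2) else 0 := by
        refine Finset.sum_congr rfl fun p _ => ?_
        rw [← Equiv.sum_comp (Equiv.mulRight (Equiv.swap p.1 p.2))]
        refine Finset.sum_congr rfl fun τ _ => ?_
        refine if_congr ?_ rfl rfl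
        simp only [mem_upCross, mem_downCross, mem_leftStay, mem_rightStay, Equiv.coe_mulRight,
          Equiv.Perm.mul_apply, Equiv.swap_apply_left, Equiv.swap_apply_right]
        tauto
    _ = ∑ τ : Equiv.Perm (Fin n), ∑ p : Fin n × Fin n,
          if p.1 ∈ leftStay j τ ∧ p.2 ∈ rightStay j τ
            then f (τ * Equiv.swap p.1 p.2) else 0 := Finset.sum_comm
    _ ≤ ∑ τ : Equiv.Perm (Fin n), Real.exp 1 * (3 * max β⁻¹ 1) ^ 2 * f τ := by
        refine Finset.sum_le_sum fun τ _ => ?_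
        calc (∑ p : Fin n × Fin n, if p.1 ∈ leftStay j τ ∧ p.2 ∈ rightStay j τ
                then f (τ * Equiv.swap p.1 p.2) else 0)
            = ∑ p ∈ leftStay j τ ×ˢ rightStay j τ, f (τ * Equiv.swap p.1 p.2) := by
              rw [← Finset.sum_filter]
              refine Finset.sum_congr ?_ fun _ _ => rfl
              ext p
              simp
          _ ≤ ∑ p ∈ leftStay j τ ×ˢ rightStay j τ,
                (Real.exp 1 * f τ) * (leftWeight β j τ p.1 * rightWeight β j τ p.2) := by
              refine Finset.sum_le_sum fun p hp => ?_
              rw [Finset.mem_product] at hp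
              have hc : j ≤ p.2 := by
                have := hp.2
                rw [mem_rightStay] at this
                exact this.1
              have hcard : ((upCross j (τ * Equiv.swap p.1 p.2)).card : ℝ)
                  ≤ 1 + (upCross j τ).card := by
                rw [add_comm]
                exact_mod_cast card_upCross_swap_le j τ hc
              have hw : 0 ≤ leftWeight β j τ p.1 * rightWeight β j τ p.2 :=
                mul_nonneg (Real.exp_pos _).le (Real.exp_pos _).le
              simp only [hf]
              rw [mallowsWeight_swap β j τ hp.1 hp.2, ← mul_assoc, ← mul_assoc (Real.exp 1),
                ← Real.exp_add]
              gcongr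
              exact (mallowsWeight_pos β τ).le
          _ = (Real.exp 1 * f τ) * ((∑ a ∈ leftStay j τ, leftWeight β j τ a) *
                ∑ c ∈ rightStay j τ, rightWeight β j τ c) := by
              rw [← Finset.mul_sum, Finset.sum_product, Finset.sum_mul_sum]
          _ ≤ (Real.exp 1 * f τ) * ((3 * max β⁻¹ 1) * (3 * max β⁻¹ 1)) := by
              have hfpos : 0 ≤ f τ := mul_nonneg (Real.exp_pos _).le (mallowsWeight_pos β τ).le
              have hr : 0 ≤ ∑ c ∈ rightStay j τ, rightWeight β j τ c :=
                Finset.sum_nonneg fun _ _ => (Real.exp_pos _).le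
              have := sum_leftWeight_le hβ j τ
              have := sum_rightWeight_le hβ j τ
              gcongr
          _ = Real.exp 1 * (3 * max β⁻¹ 1) ^ 2 * f τ := by ring
    _ = Real.exp 1 * (3 * max β⁻¹ 1) ^ 2 * ∑ τ, f τ := by rw [Finset.mul_sum]

/-- The unnormalized form of `E e^D ≤ 2 e^{7M}`. -/
lemma sum_exp_le {n : ℕ} {β : ℝ} (hβ : 0 < β) (j : Fin n) :
    ∑ σ : Equiv.Perm (Fin n), Real.exp (upCross j σ).card * mallowsWeight n β σ
      ≤ 2 * Real.exp (7 * max β⁻¹ 1) * ∑ σ : Equiv.Perm (Fin n), mallowsWeight n β σ := by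
  have hM : 1 ≤ max β⁻¹ 1 := le_max_right _ _
  have hsq := sum_sq_mul_exp_le hβ j
  set M := max β⁻¹ 1
  set S := ∑ σ : Equiv.Perm (Fin n), Real.exp (upCross j σ).card * mallowsWeight n β σ with hS
  have hS0 : 0 ≤ S :=
    Finset.sum_nonneg fun σ _ => mul_nonneg (Real.exp_pos _).le (mallowsWeight_pos β σ).le
  have hM7 : 0 < (7 * M) ^ 2 := by positivity
  have h1 : S ≤ Real.exp (7 * M) * (∑ σ : Equiv.Perm (Fin n), mallowsWeight n β σ)
      + (1 / (7 * M) ^ 2) * ∑ σ : Equiv.Perm (Fin n), ((upCross j σ).card : ℝ) ^ 2 *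
        (Real.exp (upCross j σ).card * mallowsWeight n β σ) := by
    rw [hS, Finset.mul_sum, Finset.mul_sum, ← Finset.sum_add_distrib]
    refine Finset.sum_le_sum fun σ _ => ?_
    have hw := mallowsWeight_pos β σ
    rcases le_total ((upCross j σ).card : ℝ) (7 * M) with h | h
    · have : Real.exp (upCross j σ).card * mallowsWeight n β σ
          ≤ Real.exp (7 * M) * mallowsWeight n β σ := by gcongr
      have h0 : 0 ≤ 1 / (7 * M) ^ 2 * (((upCross j σ).card : ℝ) ^ 2 *
        (Real.exp (upCross j σ).card * mallowsWeight n β σ)) := by positivity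
      linarith
    · have h0 : 0 ≤ Real.exp (7 * M) * mallowsWeight n β σ := by positivity
      have h2 : 1 ≤ 1 / (7 * M) ^ 2 * ((upCross j σ).card : ℝ) ^ 2 := by
        rw [one_div_mul_eq_div, one_le_div hM7]
        gcongr
      have h3 : 0 ≤ Real.exp (upCross j σ).card * mallowsWeight n β σ := by positivity
      have := mul_le_mul_of_nonneg_right h2 h3
      rw [← mul_assoc]
      linarith
  have h2 : (1 / (7 * M) ^ 2) * ∑ σ : Equiv.Perm (Fin n), ((upCross j σ).card : ℝ) ^ 2 *
        (Real.exp (upCross j σ).card * mallowsWeight n β σ) ≤ S / 2 := by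
    calc _ ≤ (1 / (7 * M) ^ 2) * (Real.exp 1 * (3 * M) ^ 2 * S) := by gcongr
      _ = (9 / 49 * Real.exp 1) * S := by
        field_simp
        ring
      _ ≤ (1 / 2) * S := by
        gcongr
        have := Real.exp_one_lt_d9
        linarith
      _ = S / 2 := by ring
  linarith

/-! ### The exponential variables -/

lemma expMeasure_tail {r : ℝ} (hr : 0 < r) {x : ℝ} (hx : 0 ≤ x) :
    ProbabilityTheory.expMeasure r (Set.Ici x) = ENNReal.ofReal (Real.exp (-r * x)) := by
  have := ProbabilityTheory.isProbabilityMeasure_expMeasure hr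
  have hna : ProbabilityTheory.expMeasure r {x} = 0 := by
    have : ProbabilityTheory.expMeasure r ≪ volume :=
      MeasureTheory.withDensity_absolutelyContinuous _ _
    exact this (by simp)
  have h1 : ProbabilityTheory.expMeasure r (Set.Ici x)
      = ProbabilityTheory.expMeasure r (Set.Iic x)ᶜ := by
    rw [Set.compl_Iic]
    refine le_antisymm ?_ (measure_mono Set.Ioi_subset_Ici_self)
    rw [← Set.Ioi_union_left]
    refine (measure_union_le _ _).trans ?_
    rw [hna, add_zero]
  rw [h1, prob_compl_eq_one_sub measurableSet_Iic, ← ProbabilityTheory.ofReal_cdf,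
    ProbabilityTheory.cdf_expMeasure_eq hr, if_pos hx, ← ENNReal.ofReal_one,
    ← ENNReal.ofReal_sub _ (by
      rw [sub_nonneg, Real.exp_le_one_iff]
      nlinarith)]
  congr 1
  ring_nf

/-- The factor by which `k` contributes to `exp(N_j)`, as a function of the value `x` of `E_k`. -/
noncomputable def countFactor {n : ℕ} (j : Fin n) (σ : Equiv.Perm (Fin n)) (k : Fin n) (x : ℝ) :
    ℝ≥0∞ :=
  if k < j ∧ ((j : ℕ) : ℝ) ≤ max ((k : ℕ) : ℝ) ((σ k : ℕ) : ℝ) + x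
    then ENNReal.ofReal (Real.exp 1) else 1

lemma measurable_countFactor {n : ℕ} (j : Fin n) (σ : Equiv.Perm (Fin n)) (k : Fin n) :
    Measurable (countFactor j σ k) := by
  unfold countFactor
  refine Measurable.ite ?_ measurable_const measurable_const
  exact (MeasurableSet.const _).inter
    (measurableSet_le measurable_const (measurable_const.add measurable_id))

lemma ofReal_exp_Nval {n : ℕ} (j : Fin n) (ω : Equiv.Perm (Fin n) × (Fin n → ℝ)) :
    ENNReal.ofReal (Real.exp (Nval n ω j))
      = ENNReal.ofReal (Real.exp 1) * ∏ k, countFactor j ω.1 k (ω.2 k) := by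
  have h : ∏ k, countFactor j ω.1 k (ω.2 k)
      = ENNReal.ofReal (Real.exp 1) ^ (Hset n ω j).card := by
    simp only [countFactor, Hset, bVal]
    rw [Finset.prod_ite, Finset.prod_const, Finset.prod_const_one, mul_one]
    congr!
  rw [h, Nval, ← pow_succ', ← ENNReal.ofReal_pow (Real.exp_pos _).le, ← Real.exp_nat_mul]
  congr 2
  push_cast
  ring

lemma lintegral_countFactor_le {n : ℕ} {β : ℝ} (hβ : 0 < β) (j : Fin n)
    (σ : Equiv.Perm (Fin n)) (k : Fin n) :
    ∫⁻ x, countFactor j σ k x ∂(ProbabilityTheory.expMeasure (2 * β))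
      ≤ ENNReal.ofReal (Real.exp ((if k ∈ upCross j σ then 1 else 0) +
          (if k ∈ leftStay j σ then 2 * leftWeight β j σ k else 0))) := by
  have hr : 0 < 2 * β := by positivity
  have := ProbabilityTheory.isProbabilityMeasure_expMeasure hr
  by_cases hk : k < j
  · rcases lt_or_ge (σ k) j with hs | hs
    · have hA : k ∉ upCross j σ := by simp [upCross, hs]
      have hL : k ∈ leftStay j σ := by simp [leftStay, hk, hs]
      rw [if_neg hA, if_pos hL, zero_add]
      set y : ℝ := ((j : ℕ) : ℝ) - max ((k : ℕ) : ℝ) ((σ k : ℕ) : ℝ) with hy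
      have hy0 : 0 ≤ y := by
        have e1 : ((k : ℕ) : ℝ) ≤ ((j : ℕ) : ℝ) := by exact_mod_cast hk.le
        have e2 : ((σ k : ℕ) : ℝ) ≤ ((j : ℕ) : ℝ) := by exact_mod_cast hs.le
        rw [hy, sub_nonneg]
        exact max_le e1 e2
      have he : 1 ≤ Real.exp 1 := Real.one_le_exp zero_le_one
      have hF : ∀ x, countFactor j σ k x
          = 1 + (Set.Ici y).indicator (fun _ => ENNReal.ofReal (Real.exp 1 - 1)) x := by
        intro x
        unfold countFactor
        by_cases hx : y ≤ x
        · rw [if_pos ⟨hk, by rw [hy] at hx; linarith⟩, Set.indicator_of_mem (Set.mem_Ici.mpr hx),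
            ← ENNReal.ofReal_one, ← ENNReal.ofReal_add zero_le_one (by linarith)]
          congr 1
          ring
        · rw [if_neg (fun h => hx (by rw [hy]; linarith [h.2])),
            Set.indicator_of_notMem (by simpa using hx), add_zero]
      simp only [hF]
      rw [lintegral_add_left measurable_const, lintegral_indicator_const measurableSet_Ici,
        expMeasure_tail hr hy0, lintegral_const, measure_univ, one_mul,
        ← ENNReal.ofReal_mul (by linarith), ← ENNReal.ofReal_one,
        ← ENNReal.ofReal_add zero_le_one (mul_nonneg (by linarith) (Real.exp_pos _).le)]
      refine ENNReal.ofReal_le_ofReal ?_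
      have hp : 0 < leftWeight β j σ k := Real.exp_pos _
      change 1 + (Real.exp 1 - 1) * leftWeight β j σ k ≤ _
      have h1 := Real.add_one_le_exp (2 * leftWeight β j σ k)
      have h2 := Real.exp_one_lt_d9
      nlinarith
    · have hA : k ∈ upCross j σ := by simp [upCross, hs, hk]
      have hL : k ∉ leftStay j σ := by simp [leftStay, hs]
      rw [if_pos hA, if_neg hL, add_zero]
      calc ∫⁻ x, countFactor j σ k x ∂(ProbabilityTheory.expMeasure (2 * β))
          ≤ ∫⁻ _, ENNReal.ofReal (Real.exp 1) ∂(ProbabilityTheory.expMeasure (2 * β)) := by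
            refine lintegral_mono fun x => ?_
            unfold countFactor
            split_ifs
            · exact le_rfl
            · rw [← ENNReal.ofReal_one]
              exact ENNReal.ofReal_le_ofReal (Real.one_le_exp zero_le_one)
        _ = _ := by simp
  · have hA : k ∉ upCross j σ := by simp [upCross, hk]
    have hL : k ∉ leftStay j σ := by simp [leftStay, hk]
    simp [countFactor, hk, hA, hL]

/-- The conditional exponential moment of `N_j - 1` given `σ₀ = σ`. -/
lemma lintegral_exp_count_le {n : ℕ} {β : ℝ} (hβ : 0 < β) (j : Fin n)
    (σ : Equiv.Perm (Fin n)) :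
    ∫⁻ E : Fin n → ℝ, ∏ k, countFactor j σ k (E k)
        ∂(Measure.pi fun _ : Fin n => ProbabilityTheory.expMeasure (2 * β))
      ≤ ENNReal.ofReal (Real.exp ((upCross j σ).card + 6 * max β⁻¹ 1)) := by
  have := ProbabilityTheory.isProbabilityMeasure_expMeasure (r := 2 * β) (by positivity)
  have hind := ProbabilityTheory.iIndepFun_pi
    (μ := fun _ : Fin n => ProbabilityTheory.expMeasure (2 * β))
    (X := fun k => countFactor j σ k) (fun k => (measurable_countFactor j σ k).aemeasurable)
  have hprod := ProbabilityTheory.lintegral_prod_eq_prod_lintegral_of_indepFun Finset.univ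
    (fun k (E : Fin n → ℝ) => countFactor j σ k (E k)) hind
    (fun k => (measurable_countFactor j σ k).comp (measurable_pi_apply k))
  rw [hprod]
  have hmp : ∀ k : Fin n, ∫⁻ E : Fin n → ℝ, countFactor j σ k (E k)
      ∂(Measure.pi fun _ : Fin n => ProbabilityTheory.expMeasure (2 * β))
      = ∫⁻ x, countFactor j σ k x ∂(ProbabilityTheory.expMeasure (2 * β)) := fun k =>
    (measurePreserving_eval (fun _ : Fin n => ProbabilityTheory.expMeasure (2 * β))
      k).lintegral_comp (measurable_countFactor j σ k)
  simp only [hmp]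
  refine (Finset.prod_le_prod' fun k _ => lintegral_countFactor_le hβ j σ k).trans ?_
  rw [← ENNReal.ofReal_prod_of_nonneg (fun _ _ => (Real.exp_pos _).le), ← Real.exp_sum]
  refine ENNReal.ofReal_le_ofReal (Real.exp_le_exp.mpr ?_)
  rw [Finset.sum_add_distrib, ← Finset.sum_filter, ← Finset.sum_filter]
  simp only [Finset.filter_univ_mem, Finset.sum_const, nsmul_eq_mul, mul_one, ← Finset.mul_sum]
  have := sum_leftWeight_le hβ j σ
  linarith

/-! ### Assembling the bound -/

lemma lintegral_exp_Nval_le {n : ℕ} {β : ℝ} (hβ : 0 < β) (j : Fin n) :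
    ∫⁻ ω, ENNReal.ofReal (Real.exp (Nval n ω j)) ∂(hitRunMeasure n β)
      ≤ ENNReal.ofReal (2 * Real.exp (1 + 13 * max β⁻¹ 1)) := by
  have := ProbabilityTheory.isProbabilityMeasure_expMeasure (r := 2 * β) (by positivity)
  have hmeas : Measurable fun ω : Equiv.Perm (Fin n) × (Fin n → ℝ) =>
      ENNReal.ofReal (Real.exp 1) * ∏ k, countFactor j ω.1 k (ω.2 k) := by
    refine measurable_from_prod_countable_right fun σ => ?_
    refine measurable_const.mul (Finset.measurable_prod _ fun k _ => ?_)
    exact (measurable_countFactor j σ k).comp (measurable_pi_apply k)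
  simp only [ofReal_exp_Nval]
  rw [hitRunMeasure, lintegral_prod _ hmeas.aemeasurable, mallowsMeasure,
    lintegral_finsetSum_measure]
  simp only [lintegral_smul_measure, lintegral_dirac, smul_eq_mul]
  set Z := ∑ τ : Equiv.Perm (Fin n), mallowsWeight n β τ with hZ
  have hZ0 : 0 < Z := Finset.sum_pos (fun σ _ => mallowsWeight_pos β σ) Finset.univ_nonempty
  have hP : ∀ σ : Equiv.Perm (Fin n), 0 ≤ mallowsProb n β σ := fun σ =>
    div_nonneg (mallowsWeight_pos β σ).le hZ0.le
  calc ∑ σ : Equiv.Perm (Fin n), ENNReal.ofReal (mallowsProb n β σ) *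
        ∫⁻ E : Fin n → ℝ, ENNReal.ofReal (Real.exp 1) * ∏ k, countFactor j σ k (E k)
          ∂(Measure.pi fun _ : Fin n => ProbabilityTheory.expMeasure (2 * β))
      ≤ ∑ σ : Equiv.Perm (Fin n), ENNReal.ofReal (mallowsProb n β σ *
          (Real.exp 1 * Real.exp ((upCross j σ).card + 6 * max β⁻¹ 1))) := by
        refine Finset.sum_le_sum fun σ _ => ?_
        rw [lintegral_const_mul' _ _ ENNReal.ofReal_ne_top, ENNReal.ofReal_mul (hP σ),
          ENNReal.ofReal_mul (Real.exp_pos _).le]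
        gcongr
        exact lintegral_exp_count_le hβ j σ
    _ = ENNReal.ofReal (∑ σ : Equiv.Perm (Fin n), mallowsProb n β σ *
          (Real.exp 1 * Real.exp ((upCross j σ).card + 6 * max β⁻¹ 1))) := by
        rw [ENNReal.ofReal_sum_of_nonneg]
        intro σ _
        exact mul_nonneg (hP σ) (by positivity)
    _ ≤ _ := by
        refine ENNReal.ofReal_le_ofReal ?_
        calc ∑ σ : Equiv.Perm (Fin n), mallowsProb n β σ *
              (Real.exp 1 * Real.exp ((upCross j σ).card + 6 * max β⁻¹ 1))
            = Real.exp (1 + 6 * max β⁻¹ 1) / Z *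
              ∑ σ : Equiv.Perm (Fin n), Real.exp (upCross j σ).card * mallowsWeight n β σ := by
              rw [Finset.mul_sum]
              refine Finset.sum_congr rfl fun σ _ => ?_
              rw [mallowsProb, ← hZ, Real.exp_add, Real.exp_add]
              ring
          _ ≤ Real.exp (1 + 6 * max β⁻¹ 1) / Z * (2 * Real.exp (7 * max β⁻¹ 1) * Z) := by
              have := sum_exp_le hβ j
              gcongr
          _ = 2 * Real.exp (1 + 13 * max β⁻¹ 1) := by
              have : 1 + 13 * max β⁻¹ 1 = (1 + 6 * max β⁻¹ 1) + 7 * max β⁻¹ 1 := by ring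
              rw [this, Real.exp_add (1 + 6 * max β⁻¹ 1)]
              field_simp

/-- There is an absolute constant `C₀ ≥ 1` such that for all `n ≥ 1`, `β > 0`,
`j ∈ [n]`, and real `u ≥ C₀ max{β⁻¹, 1}`: `P(N_j ≥ u) ≤ 4 exp(-u/8)`. -/
theorem statement10 :
    ∃ C₀ : ℝ, 1 ≤ C₀ ∧
      ∀ n : ℕ, 0 < n → ∀ β : ℝ, 0 < β → ∀ j : Fin n,
        ∀ u : ℝ, C₀ * max β⁻¹ 1 ≤ u →
          hitRunMeasure n β {ω | u ≤ (Nval n ω j : ℝ)}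
            ≤ ENNReal.ofReal (4 * Real.exp (-u / 8)) := by
  refine ⟨16, by norm_num, ?_⟩
  intro n _ β hβ j u hu
  have := ProbabilityTheory.isProbabilityMeasure_expMeasure (r := 2 * β) (by positivity)
  have hM : 1 ≤ max β⁻¹ 1 := le_max_right _ _
  have hmeas : Measurable fun ω : Equiv.Perm (Fin n) × (Fin n → ℝ) =>
      ENNReal.ofReal (Real.exp (Nval n ω j)) := by
    simp only [ofReal_exp_Nval]
    refine measurable_from_prod_countable_right fun σ => ?_
    refine measurable_const.mul (Finset.measurable_prod _ fun k _ => ?_)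
    exact (measurable_countFactor j σ k).comp (measurable_pi_apply k)
  have hset : {ω | u ≤ (Nval n ω j : ℝ)}
      = {ω | ENNReal.ofReal (Real.exp u) ≤ ENNReal.ofReal (Real.exp (Nval n ω j))} := by
    ext ω
    simp only [Set.mem_ofPred_eq]
    rw [ENNReal.ofReal_le_ofReal_iff (Real.exp_pos _).le, Real.exp_le_exp]
  rw [hset]
  refine (meas_ge_le_lintegral_div hmeas.aemeasurable
    (by simpa using Real.exp_pos u) ENNReal.ofReal_ne_top).trans ?_
  refine (ENNReal.div_le_div_right (lintegral_exp_Nval_le hβ j) _).trans ?_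
  rw [← ENNReal.ofReal_div_of_pos (Real.exp_pos u)]
  refine ENNReal.ofReal_le_ofReal ?_
  rw [mul_div_assoc, ← Real.exp_sub]
  -- `1 + 13 M ≤ 14 M ≤ (7/8) u`
  have h1 : Real.exp (1 + 13 * max β⁻¹ 1 - u) ≤ Real.exp (-u / 8) :=
    Real.exp_le_exp.mpr (by linarith)
  have h2 := Real.exp_pos (-u / 8)
  linarith
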